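/- Let λ ∈ ℂ with Re λ ≠ 0. Then λ is an eigenvalue of 𝓛₁, i.e. there exists a measurable f : ℝ³ → ℂ, not almost everywhere zero, with (1+|v|²)·f integrable and (λ + i v₁)·f(v) = −i ∂_{v₁}μ(v)·φ(f) for almost every v (where φ(f) := −∫_{ℝ³} v₁² f dv), if and only if D(λ) := 1 − i ∫_{ℝ³} v₁² ∂_{v₁}μ(v) / (λ + i v₁) dv = 0. -/

import Mathlib

open MeasureTheory

noncomputable section

abbrev E3 : Type := EuclideanSpace ℝ (Fin 3)

/-- Partial derivative in the `i`-th coordinate for functions on `ℝ³`. -/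
noncomputable def pdE (i : Fin 3) (g : E3 → ℝ) : E3 → ℝ :=
  fun v => fderiv ℝ g v (EuclideanSpace.single i 1)

theorem continuous_pdE {g : E3 → ℝ} (hg : ContDiff ℝ 1 g) (i : Fin 3) : Continuous (pdE i g) :=
  (hg.continuous_fderiv one_ne_zero).clm_apply continuous_const

theorem abs_pdE_le_sqrt_sum_sq (g : E3 → ℝ) (i : Fin 3) (v : E3) :
    |pdE i g v| ≤ Real.sqrt (∑ j, (pdE j g v) ^ 2) :=
  Real.abs_le_sqrt <|
    Finset.single_le_sum (f := fun j => (pdE j g v) ^ 2) (fun _ _ => sq_nonneg _)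
      (Finset.mem_univ i)

theorem abs_re_le_norm_add_I_mul (l : ℂ) (x : ℝ) : |l.re| ≤ ‖l + Complex.I * (x : ℂ)‖ := by
  simpa using Complex.abs_re_le_norm (l + Complex.I * (x : ℂ))

theorem add_I_mul_ne_zero {l : ℂ} (hl : l.re ≠ 0) (x : ℝ) : l + Complex.I * (x : ℂ) ≠ 0 :=
  norm_pos_iff.mp ((abs_pos.mpr hl).trans_le (abs_re_le_norm_add_I_mul l x))

/-- The eigenfunction of `𝓛₁` normalised by `∫ v₁² f dv = 1`. -/
def resolventProfile (μ : E3 → ℝ) (l : ℂ) (v : E3) : ℂ :=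
  Complex.I * (pdE 0 μ v : ℂ) / (l + Complex.I * (v 0 : ℂ))

theorem continuous_resolventProfile {μ : E3 → ℝ} (hμ : ContDiff ℝ 1 μ) {l : ℂ} (hl : l.re ≠ 0) :
    Continuous (resolventProfile μ l) := by
  have h := continuous_pdE hμ 0
  exact Continuous.div (by fun_prop) (by fun_prop) fun v => add_I_mul_ne_zero hl (v 0)

theorem integrable_weight_mul_resolventProfile {μ : E3 → ℝ} (hμ : ContDiff ℝ 1 μ)
    (hμint : Integrable (fun v : E3 => (1 + ‖v‖) ^ 3 * Real.sqrt (∑ i, (pdE i μ v) ^ 2)))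
    {l : ℂ} (hl : l.re ≠ 0) :
    Integrable (fun v : E3 => ((1 + ‖v‖ ^ 2 : ℝ) : ℂ) * resolventProfile μ l v) := by
  have hcont := continuous_resolventProfile hμ hl
  refine (hμint.mul_const |l.re|⁻¹).mono' (by fun_prop) (.of_forall fun v => ?_)
  have hw : 1 + ‖v‖ ^ 2 ≤ (1 + ‖v‖) ^ 3 := by
    nlinarith [norm_nonneg v, pow_nonneg (norm_nonneg v) 2, pow_nonneg (norm_nonneg v) 3]
  have hl' : 0 < |l.re| := abs_pos.mpr hl
  have hd := abs_re_le_norm_add_I_mul l (v 0)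
  have hp := abs_pdE_le_sqrt_sum_sq μ 0 v
  rw [resolventProfile, norm_mul, norm_div, norm_mul, Complex.norm_I, one_mul, Complex.norm_real,
    Complex.norm_real, Real.norm_eq_abs, Real.norm_eq_abs, abs_of_nonneg (by positivity),
    div_eq_mul_inv, ← mul_assoc]
  gcongr

theorem integral_sq_mul_resolventProfile (μ : E3 → ℝ) (l : ℂ) :
    ∫ v : E3, (((v 0) ^ 2 : ℝ) : ℂ) * resolventProfile μ l v
      = Complex.I * ∫ v : E3, (((v 0) ^ 2 : ℝ) : ℂ) * (pdE 0 μ v : ℂ)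
            / (l + Complex.I * (v 0 : ℂ)) := by
  rw [← integral_const_mul]
  congr 1 with v
  rw [resolventProfile]
  ring

/-- Eigenvalue characterization for the Fourier-mode operator
`𝓛₁ f := -iv₁ f + ∂_{v₁}μ·φ(f)`, `φ(f) := -∫ v₁² f dv`: for `Re λ ≠ 0`, `λ` is an eigenvalue
of `𝓛₁` if and only if `D(λ) := 1 - i∫ v₁² ∂_{v₁}μ/(λ + iv₁) dv = 0`. -/
theorem eigenvalue_iff_dispersion_vanishes (μ : E3 → ℝ) (hμ : ContDiff ℝ 1 μ)
    (hμint : Integrable (fun v : E3 => (1 + ‖v‖) ^ 3 * Real.sqrt (∑ i, (pdE i μ v) ^ 2)))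
    (l : ℂ) (hl : l.re ≠ 0) :
    (∃ f : E3 → ℂ, Measurable f ∧
        Integrable (fun v : E3 => ((1 + ‖v‖ ^ 2 : ℝ) : ℂ) * f v) ∧
        ¬ (f =ᵐ[volume] 0) ∧
        (∀ᵐ v : E3,
          (l + Complex.I * (v 0 : ℂ)) * f v
            = -Complex.I * (pdE 0 μ v : ℂ) *
                (-(∫ w : E3, (((w 0) ^ 2 : ℝ) : ℂ) * f w))))
      ↔ (1 : ℂ) - Complex.I *
          ∫ v : E3, (((v 0) ^ 2 : ℝ) : ℂ) * (pdE 0 μ v : ℂ)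
            / (l + Complex.I * (v 0 : ℂ)) = 0 := by
  rw [← integral_sq_mul_resolventProfile, sub_eq_zero]
  constructor
  · rintro ⟨f, -, -, hf0, hf⟩
    set Φ : ℂ := ∫ w : E3, (((w 0) ^ 2 : ℝ) : ℂ) * f w with hΦ
    have hfeq : f =ᵐ[volume] fun v => Φ * resolventProfile μ l v := by
      filter_upwards [hf] with v hv
      refine mul_left_cancel₀ (add_I_mul_ne_zero hl (v 0)) (hv.trans ?_)
      have := add_I_mul_ne_zero hl (v 0)
      rw [resolventProfile]
      field_simp
    have hΦ0 : Φ ≠ 0 := by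
      rintro h
      exact hf0 (hfeq.trans (.of_forall fun v => by simp [h]))
    have hself : Φ = Φ * ∫ v : E3, (((v 0) ^ 2 : ℝ) : ℂ) * resolventProfile μ l v := by
      rw [← integral_const_mul]
      refine hΦ.trans (integral_congr_ae ?_)
      filter_upwards [hfeq] with v hv
      rw [hv]
      ring
    exact mul_left_cancel₀ hΦ0 ((mul_one Φ).trans hself)
  · intro h
    refine ⟨resolventProfile μ l, (continuous_resolventProfile hμ hl).measurable,
      integrable_weight_mul_resolventProfile hμ hμint hl, fun h0 => ?_, .of_forall fun v => ?_⟩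
    · refine one_ne_zero (h.trans (integral_eq_zero_of_ae ?_))
      filter_upwards [h0] with v hv
      simp [hv]
    · have := add_I_mul_ne_zero hl (v 0)
      rw [← h, resolventProfile]
      field_simp

end
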